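/- arXiv:1802.03799 — 2 statements merged into one kernel-verified Lean document; each statement's English description precedes it below -/
import Mathlib

section
/- Let 0 < α < 1 and let p be the analytic function on Δ defined by p(z) = ((1 + z√α)/(1 − z√α))^{1/(2√α)} − 1 (principal branch). Then p is convex univalent in Δ; in particular Re(1 + z p''(z)/p'(z)) > 0 for all z ∈ Δ. -/
/-!
Write `r = √α`, `c = 1/(2r)`, `w(z) = (1 + rz)/(1 - rz)`, so that `p = exp (c log w) - 1`. Since
`‖rz‖ < 1` on the closed unit disk, everything extends analytically across the unit circle, and
`p' = exp L` with `L = c log w - log (1 - r²z²)`, `L' = (1 + 2r²z)/(1 - r²z²)`.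

* Analytic condition: `1 + z p''/p' = 1 + z L' = (1 + z + r²z²)/(1 - r²z²)`, whose real part has the
  sign of `(1 - r²|z|²)(1 + r²|z|² + Re z) > 0`, on the *closed* disk.
* Injectivity: `|sin (arg w)| = 2r|Im z| / |1 - r²z²| ≤ 2r`, so by Jordan's inequality
  `|c arg w| ≤ π/2` and `exp` is injective on the relevant values of `c log w`.
* Convexity: along the circle the tangent angle `t + Im L(e^{it})` of the boundary curve is strictly
  increasing and grows by exactly `2π` per turn. Hence the height of the curve in the normal direction
  at a given boundary point first decreases and then increases during one turn, so it is
  maximal at that point; by the maximum principle the whole image lies on one side of the tangent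
  line (`support`). An open set with a supporting line at each frontier point is convex
  (`convex_of_support`).
-/

/-- The function `p(z) = ((1 + z√α)/(1 − z√α))^(1/(2√α)) − 1` on the unit disk,
with the principal branch of the power (`Complex.cpow`); `p(0) = 0`, `p'(0) = 1`. -/
noncomputable def pfun (α : ℝ) (z : ℂ) : ℂ :=
  ((1 + z * (Real.sqrt α : ℂ)) / (1 - z * (Real.sqrt α : ℂ))) ^
    ((1 / (2 * Real.sqrt α) : ℝ) : ℂ) - 1

open Complex Set Metric Filter Topology

namespace PConvex

/-- The Möbius map `w(z) = (1 + rz)/(1 - rz)`. -/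
noncomputable def W (r : ℝ) (z : ℂ) : ℂ := (1 + z * (r : ℂ)) / (1 - z * (r : ℂ))

/-- The denominator `1 - r²z²`. -/
noncomputable def Q (r : ℝ) (z : ℂ) : ℂ := 1 - (r : ℂ) ^ 2 * z ^ 2

/-- A logarithm of `p'`, namely `c log w(z) - log (1 - r²z²)`. -/
noncomputable def L (r c : ℝ) (z : ℂ) : ℂ := log (W r z) * (c : ℂ) - log (Q r z)

/-- The function `p`, with independent parameters `r` and `c`. -/
noncomputable def P (r c : ℝ) (z : ℂ) : ℂ := W r z ^ (c : ℂ) - 1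

lemma add_ne {r : ℝ} {z : ℂ} (h : ‖z * (r : ℂ)‖ < 1) : 1 + z * (r : ℂ) ≠ 0 := by
  intro h0
  have : z * (r : ℂ) = -1 := by linear_combination h0
  rw [this] at h
  simp at h

lemma sub_ne {r : ℝ} {z : ℂ} (h : ‖z * (r : ℂ)‖ < 1) : 1 - z * (r : ℂ) ≠ 0 := by
  intro h0
  have : z * (r : ℂ) = 1 := by linear_combination -h0
  rw [this] at h
  simp at h

lemma W_re_pos {r : ℝ} {z : ℂ} (h : ‖z * (r : ℂ)‖ < 1) : 0 < (W r z).re := by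
  have hn : 0 < normSq (1 - z * (r : ℂ)) := normSq_pos.2 (sub_ne h)
  have h2 : normSq (z * (r : ℂ)) < 1 := by
    rw [normSq_eq_norm_sq]
    nlinarith [norm_nonneg (z * (r : ℂ))]
  rw [W, div_re, ← add_div]
  apply div_pos _ hn
  rw [normSq_apply] at h2
  simp only [add_re, sub_re, one_re, add_im, sub_im, one_im]
  nlinarith

lemma Q_re_pos {r : ℝ} {z : ℂ} (h : ‖z * (r : ℂ)‖ < 1) : 0 < (Q r z).re := by
  have h1 : ‖(r : ℂ) ^ 2 * z ^ 2‖ < 1 := by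
    have : (r : ℂ) ^ 2 * z ^ 2 = (z * r) ^ 2 := by ring
    rw [this, norm_pow]
    exact pow_lt_one₀ (norm_nonneg _) h two_ne_zero
  have := (re_le_norm _).trans_lt h1
  rw [Q, sub_re, one_re]
  linarith

lemma Q_ne {r : ℝ} {z : ℂ} (h : ‖z * (r : ℂ)‖ < 1) : Q r z ≠ 0 := by
  intro h0
  have := Q_re_pos h
  simp [h0] at this

lemma W_ne {r : ℝ} {z : ℂ} (h : ‖z * (r : ℂ)‖ < 1) : W r z ≠ 0 :=
  div_ne_zero (add_ne h) (sub_ne h)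

lemma norm_lt {r : ℝ} (hr0 : 0 < r) (hr1 : r < 1) {z : ℂ} (h : ‖z‖ ≤ 1) :
    ‖z * (r : ℂ)‖ < 1 := by
  rw [norm_mul, norm_real, Real.norm_of_nonneg hr0.le]
  nlinarith [norm_nonneg z]

lemma hasDerivAt_clogW {r c : ℝ} (hc : c * (2 * r) = 1) {z : ℂ} (h : ‖z * (r : ℂ)‖ < 1) :
    HasDerivAt (fun z => log (W r z) * (c : ℂ)) (1 / Q r z) z := by
  have h1 : HasDerivAt (fun z : ℂ => 1 + z * (r : ℂ)) (r : ℂ) z := by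
    simpa using ((hasDerivAt_id z).mul_const (r : ℂ)).const_add 1
  have h2 : HasDerivAt (fun z : ℂ => 1 - z * (r : ℂ)) (-(r : ℂ)) z := by
    simpa using ((hasDerivAt_id z).mul_const (r : ℂ)).const_sub 1
  have h3 := ((h1.div h2 (sub_ne h)).clog (Or.inl (W_re_pos h))).mul_const (c : ℂ)
  refine h3.congr_deriv ?_
  have ha := add_ne h
  have hs := sub_ne h
  have hq : Q r z = (1 + z * r) * (1 - z * r) := by rw [Q]; ring
  have hc' : (c : ℂ) * (2 * r) = 1 := by exact_mod_cast hc
  rw [hq]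
  simp only [Pi.div_apply]
  have e : ((r : ℂ) * (1 - z * r) - (1 + z * r) * -(r : ℂ)) * c = 1 := by
    linear_combination hc'
  rw [div_div, div_mul_eq_mul_div, e]
  congr 1
  field_simp

lemma hasDerivAt_L {r c : ℝ} (hc : c * (2 * r) = 1) {z : ℂ} (h : ‖z * (r : ℂ)‖ < 1) :
    HasDerivAt (L r c) ((1 + 2 * (r : ℂ) ^ 2 * z) / Q r z) z := by
  have h1 : HasDerivAt (Q r) (-(2 * (r : ℂ) ^ 2 * z)) z := by
    refine (((hasDerivAt_pow 2 z).const_mul ((r : ℂ) ^ 2)).const_sub 1).congr_deriv ?_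
    push_cast
    ring
  refine ((hasDerivAt_clogW hc h).sub (h1.clog (Or.inl (Q_re_pos h)))).congr_deriv ?_
  ring

lemma P_eq {r c : ℝ} {z : ℂ} (h : ‖z * (r : ℂ)‖ < 1) :
    P r c z = exp (log (W r z) * (c : ℂ)) - 1 := by
  rw [P, cpow_def_of_ne_zero (W_ne h)]

lemma eventually_norm {r : ℝ} {z : ℂ} (h : ‖z * (r : ℂ)‖ < 1) :
    ∀ᶠ y in 𝓝 z, ‖y * (r : ℂ)‖ < 1 := by
  have : Continuous fun y : ℂ => ‖y * (r : ℂ)‖ := by fun_prop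
  exact this.continuousAt.eventually_lt continuousAt_const h

lemma hasDerivAt_P {r c : ℝ} (hc : c * (2 * r) = 1) {z : ℂ} (h : ‖z * (r : ℂ)‖ < 1) :
    HasDerivAt (P r c) (exp (L r c z)) z := by
  have h1 := ((hasDerivAt_clogW hc h).cexp).sub_const 1
  refine (h1.congr_of_eventuallyEq ?_).congr_deriv ?_
  · filter_upwards [eventually_norm h] with y hy using P_eq hy
  · rw [L, exp_sub, exp_log (Q_ne h)]
    ring

/-- `Re (1 + z L'(z)) > 0` on the closed disk; this is the convexity condition, up to and including
the boundary. -/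
lemma key_pos {r : ℝ} (hr0 : 0 < r) (hr1 : r < 1) {z : ℂ} (hz : ‖z‖ ≤ 1) :
    0 < (1 + z * ((1 + 2 * (r : ℂ) ^ 2 * z) / Q r z)).re := by
  have h := norm_lt hr0 hr1 hz
  have hq := Q_ne h
  have e : 1 + z * ((1 + 2 * (r : ℂ) ^ 2 * z) / Q r z)
      = (1 + z + ((r ^ 2 : ℝ) : ℂ) * z ^ 2) / Q r z := by
    field_simp
    rw [Q]
    push_cast
    ring
  have eQ : Q r z = 1 - ((r ^ 2 : ℝ) : ℂ) * z ^ 2 := by rw [Q]; push_cast; ring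
  have hn : 0 < normSq (Q r z) := normSq_pos.2 hq
  rw [e, div_re, ← add_div]
  apply div_pos _ hn
  have hs : z.re * z.re + z.im * z.im ≤ 1 := by
    rw [← normSq_apply, normSq_eq_norm_sq]
    nlinarith [norm_nonneg z]
  have ha0 : 0 < r ^ 2 := by positivity
  have ha1 : r ^ 2 < 1 := by nlinarith
  rw [eQ]
  generalize r ^ 2 = a at ha0 ha1
  obtain ⟨x, y⟩ := z
  simp only [sq, add_re, sub_re, one_re, add_im, sub_im, one_im, mul_re, mul_im, ofReal_re,
    ofReal_im] at hs ⊢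
  have hA : 0 < 1 - a * (x * x + y * y) := by nlinarith [mul_self_nonneg x, mul_self_nonneg y]
  have hx : -1 ≤ x := by nlinarith [mul_self_nonneg y]
  have hB : 0 < 1 + a * (x * x + y * y) + x := by
    rcases hx.eq_or_lt with h | h
    · subst h
      nlinarith [mul_nonneg ha0.le (mul_self_nonneg y)]
    · have : 0 ≤ a * (x * x + y * y) :=
        mul_nonneg ha0.le (add_nonneg (mul_self_nonneg x) (mul_self_nonneg y))
      linarith
  have := mul_pos hA hB
  nlinarith

/-! ### Injectivity -/

lemma abs_arg_le {r : ℝ} (hr0 : 0 < r) (hr1 : r < 1) {z : ℂ} (hz : ‖z‖ ≤ 1) :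
    |arg (W r z)| ≤ Real.pi * r := by
  have h := norm_lt hr0 hr1 hz
  have hs := sub_ne h
  have ha := add_ne h
  have h1 : |arg (W r z)| ≤ Real.pi / 2 := abs_arg_le_pi_div_two_iff.2 (W_re_pos h).le
  have h2 : |Real.sin (arg (W r z))| ≤ 2 * r := by
    have hW : 0 < ‖W r z‖ := norm_pos_iff.2 (W_ne h)
    rw [sin_arg, abs_div, abs_of_pos hW, div_le_iff₀ hW]
    have e : (W r z).im = 2 * r * z.im / normSq (1 - z * (r : ℂ)) := by
      rw [W, div_im, ← sub_div]
      congr 1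
      simp
      ring
    have hnn : 0 < ‖1 - z * (r : ℂ)‖ := norm_pos_iff.2 hs
    have e2 : ‖W r z‖ = ‖Q r z‖ / normSq (1 - z * (r : ℂ)) := by
      have hq : Q r z = (1 + z * r) * (1 - z * r) := by rw [Q]; ring
      rw [hq, W, norm_div, norm_mul, normSq_eq_norm_sq]
      field_simp
    have hp : 0 < normSq (1 - z * (r : ℂ)) := normSq_pos.2 hs
    have h3 : |z.im| ≤ ‖Q r z‖ := by
      refine abs_le_of_sq_le_sq ?_ (norm_nonneg _)
      have eQ : Q r z = 1 - ((r ^ 2 : ℝ) : ℂ) * z ^ 2 := by rw [Q]; push_cast; ring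
      rw [eQ, ← normSq_eq_norm_sq, normSq_apply]
      have hs : z.re * z.re + z.im * z.im ≤ 1 := by
        rw [← normSq_apply, normSq_eq_norm_sq]
        nlinarith [norm_nonneg z]
      have ha0 : 0 < r ^ 2 := by positivity
      have ha1 : r ^ 2 < 1 := by nlinarith
      generalize r ^ 2 = a at ha0 ha1
      obtain ⟨x, y⟩ := z
      simp only [sq, sub_re, one_re, sub_im, one_im, mul_re, mul_im, ofReal_re,
        ofReal_im] at hs ⊢
      -- `|1 - az²|² = (1 - a|z|²)² + 4ay² ≥ (1 - a)² y² + 4ay² = (1 + a)² y²`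
      have hA : 1 - a ≤ 1 - a * (x * x + y * y) := by nlinarith
      have hB : (1 - a) ^ 2 ≤ (1 - a * (x * x + y * y)) ^ 2 := by
        apply pow_le_pow_left₀ (by linarith) hA
      have hy : y * y ≤ 1 := by nlinarith [mul_self_nonneg x]
      have hC : (1 - a) ^ 2 * (y * y) ≤ (1 - a) ^ 2 := by
        nlinarith [sq_nonneg (1 - a)]
      nlinarith [mul_nonneg ha0.le (mul_self_nonneg y),
        mul_nonneg (mul_self_nonneg a) (mul_self_nonneg y)]
    rw [e, e2, abs_div, abs_of_pos hp, abs_mul, abs_of_pos (by positivity : 0 < 2 * r),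
      mul_div_assoc']
    gcongr
  have h3 := Real.mul_abs_le_abs_sin h1
  have h4 : 2 / Real.pi * |arg (W r z)| ≤ 2 * r := h3.trans h2
  have hpi := Real.pi_pos
  rw [div_mul_eq_mul_div, div_le_iff₀ hpi] at h4
  linarith

lemma injOn_P {r c : ℝ} (hr0 : 0 < r) (hr1 : r < 1) (hc : c * (2 * r) = 1) :
    InjOn (P r c) (closedBall 0 1) := by
  have hc0 : 0 < c := by
    by_contra hn
    nlinarith
  have him : ∀ z : ℂ, ‖z‖ ≤ 1 → |(log (W r z) * (c : ℂ)).im| < Real.pi := by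
    intro z hz
    have h1 := abs_arg_le hr0 hr1 hz
    rw [im_mul_ofReal, log_im, abs_mul, abs_of_pos hc0]
    nlinarith [Real.pi_pos, mul_le_mul_of_nonneg_right h1 hc0.le]
  intro z hz y hy hzy
  rw [mem_closedBall_zero_iff] at hz hy
  have hz' := norm_lt hr0 hr1 hz
  have hy' := norm_lt hr0 hr1 hy
  rw [P_eq hz', P_eq hy', sub_left_inj] at hzy
  have hz2 := abs_lt.1 (him z hz)
  have hy2 := abs_lt.1 (him y hy)
  have h1 := exp_inj_of_neg_pi_lt_of_le_pi hz2.1 hz2.2.le hy2.1 hy2.2.le hzy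
  have h2 := mul_right_cancel₀ (ofReal_ne_zero.2 hc0.ne') h1
  have h3 : W r z = W r y := by
    rw [← exp_log (W_ne hz'), h2, exp_log (W_ne hy')]
  rw [W, W, div_eq_div_iff (sub_ne hz') (sub_ne hy')] at h3
  have hr : (2 * (r : ℂ)) ≠ 0 := by
    simpa using hr0.ne'
  apply mul_right_cancel₀ hr
  linear_combination h3

/-! ### Convexity of the image -/

/-- An open planar set with a supporting line at each frontier point is convex: a segment with end
points in `S` leaving `S` would meet the frontier at some `b`, and a functional maximal at `b`
would be constant on the segment, hence attain its maximum over the open set `S` inside `S`. -/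
lemma convex_of_support {S : Set ℂ} (hS : IsOpen S)
    (h : ∀ b ∈ frontier S, ∃ a : ℂ, a ≠ 0 ∧ ∀ x ∈ S, (x * a).re ≤ (b * a).re) : Convex ℝ S := by
  rw [convex_iff_segment_subset]
  intro x hx y hy
  by_contra hn
  obtain ⟨b, hb, hbf⟩ : (segment ℝ x y ∩ frontier S).Nonempty := by
    by_contra hne
    refine hn ((convex_segment x y).isPreconnected.subset_of_closure_inter_subset hS
      ⟨x, left_mem_segment ℝ x y, hx⟩ ?_)
    rintro b ⟨hb, hbs⟩
    by_contra hbS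
    exact hne ⟨b, hbs, by rw [hS.frontier_eq]; exact ⟨hb, hbS⟩⟩
  obtain ⟨a, ha, hmax⟩ := h b hbf
  have strict : ∀ x ∈ S, (x * a).re < (b * a).re := by
    intro x hx
    have hcont : Tendsto (fun t : ℝ => x + t * a⁻¹) (𝓝[>] 0) (𝓝 x) := by
      have : Continuous fun t : ℝ => x + t * a⁻¹ := by fun_prop
      simpa using (this.tendsto 0).mono_left nhdsWithin_le_nhds
    obtain ⟨t, ht, ht0⟩ := ((hcont.eventually (hS.mem_nhds hx)).and self_mem_nhdsWithin).exists
    have := hmax _ ht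
    have e : (x + t * a⁻¹) * a = x * a + t := by field_simp
    rw [e, add_re, ofReal_re] at this
    have ht0' : 0 < t := ht0
    linarith
  obtain ⟨s, t, hs, ht, hst, rfl⟩ := hb
  have h1 := strict x hx
  have h2 := strict y hy
  simp only [add_mul, smul_mul_assoc, add_re, smul_re, smul_eq_mul] at h1 h2
  generalize (x * a).re = X at *
  generalize (y * a).re = Y at *
  have hs' : s = 1 - t := by linarith
  subst hs'
  rcases le_total X Y with hXY | hXY
  · nlinarith [mul_nonneg hs (sub_nonneg.2 hXY)]
  · nlinarith [mul_nonneg ht (sub_nonneg.2 hXY)]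

/-- The logarithm `it + L(e^{it})` of `ζ p'(ζ)` at `ζ = e^{it}`; up to `π/2`, its imaginary part is
the tangent angle of the boundary curve `t ↦ p(e^{it})`. -/
noncomputable def M (r c t : ℝ) : ℂ := t * I + L r c (exp (t * I))

lemma hasDerivAt_circle (t : ℝ) :
    HasDerivAt (fun t : ℝ => exp (t * I)) (exp (t * I) * I) t := by
  have h := ((hasDerivAt_id (t : ℂ)).mul_const I).cexp.comp_ofReal
  simpa using h

lemma hasDerivAt_M {r c : ℝ} (hr0 : 0 < r) (hr1 : r < 1) (hc : c * (2 * r) = 1) (t : ℝ) :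
    HasDerivAt (M r c)
      ((1 + exp (t * I) * ((1 + 2 * (r : ℂ) ^ 2 * exp (t * I)) / Q r (exp (t * I)))) * I) t := by
  have hz : ‖exp (t * I)‖ ≤ 1 := (norm_exp_ofReal_mul_I t).le
  have h1 : HasDerivAt (fun t : ℝ => (t : ℂ) * I) I t := by
    simpa using ((hasDerivAt_id (t : ℂ)).mul_const I).comp_ofReal
  have h2 := (hasDerivAt_L hc (norm_lt hr0 hr1 hz)).comp t (hasDerivAt_circle t)
  refine (h1.add h2).congr_deriv ?_
  ring

lemma strictMono_M_im {r c : ℝ} (hr0 : 0 < r) (hr1 : r < 1) (hc : c * (2 * r) = 1) :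
    StrictMono fun t => (M r c t).im := by
  have hd : ∀ t, HasDerivAt (fun t => (M r c t).im) _ t := fun t =>
    imCLM.hasFDerivAt.comp_hasDerivAt t (hasDerivAt_M hr0 hr1 hc t)
  apply strictMono_of_deriv_pos
  intro t
  rw [(hd t).deriv]
  have := key_pos hr0 hr1 (norm_exp_ofReal_mul_I t).le
  rw [imCLM_apply, mul_I_im]
  exact this

lemma M_add_two_pi (r c t : ℝ) : M r c (t + 2 * Real.pi) = M r c t + 2 * Real.pi * I := by
  have : exp (((t + 2 * Real.pi : ℝ) : ℂ) * I) = exp (t * I) := by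
    push_cast
    rw [add_mul, exp_add, exp_two_pi_mul_I, mul_one]
  rw [M, M, this]
  push_cast
  ring

/-- The height of the boundary curve in the normal direction `ζ₀ p'(ζ₀) = exp (M t₀)` is maximal at
`t₀`: its derivative is a negative multiple of the sine of the turning angle
`Im (M t - M t₀)`, which increases from `0` to `2π` during one turn. -/
lemma boundary_max {r c : ℝ} (hr0 : 0 < r) (hr1 : r < 1) (hc : c * (2 * r) = 1) (t₀ t : ℝ)
    (ht : t ∈ Icc t₀ (t₀ + 2 * Real.pi)) :
    (P r c (exp (t * I)) * exp (-M r c t₀)).re ≤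
      (P r c (exp (t₀ * I)) * exp (-M r c t₀)).re := by
  set h : ℝ → ℝ := fun t => (P r c (exp (t * I)) * exp (-M r c t₀)).re with hh
  have hd : ∀ t, HasDerivAt h
      (-(Real.exp (M r c t - M r c t₀).re * Real.sin (M r c t - M r c t₀).im)) t := by
    intro t
    have hz : ‖exp (t * I)‖ ≤ 1 := (norm_exp_ofReal_mul_I t).le
    have h1 := ((hasDerivAt_P hc (norm_lt hr0 hr1 hz)).comp t (hasDerivAt_circle t)).mul_const
      (exp (-M r c t₀))
    refine (reCLM.hasFDerivAt.comp_hasDerivAt t h1).congr_deriv ?_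
    have e : exp (L r c (exp (t * I))) * (exp (t * I) * I) * exp (-M r c t₀)
        = exp (M r c t - M r c t₀) * I := by
      rw [sub_eq_add_neg, exp_add, M.eq_1 r c t, exp_add]
      ring
    rw [e, reCLM_apply, mul_I_re, exp_im]
  have hmono := strictMono_M_im hr0 hr1 hc
  have hcont : Continuous fun t => (M r c t).im := by
    refine continuous_im.comp (continuous_iff_continuousAt.2 fun t => ?_)
    exact (hasDerivAt_M hr0 hr1 hc t).continuousAt
  have hpi := Real.pi_pos
  have hend : (M r c (t₀ + 2 * Real.pi)).im = (M r c t₀).im + 2 * Real.pi := by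
    rw [M_add_two_pi]
    simp
  have hper : h (t₀ + 2 * Real.pi) = h t₀ := by
    have : exp (((t₀ + 2 * Real.pi : ℝ) : ℂ) * I) = exp (t₀ * I) := by
      push_cast
      rw [add_mul, exp_add, exp_two_pi_mul_I, mul_one]
    simp only [hh, this]
  -- `t₁` is the parameter at which the tangent has turned by `π`.
  obtain ⟨t₁, ht₁, hM₁⟩ : (M r c t₀).im + Real.pi ∈
      (fun t => (M r c t).im) '' Icc t₀ (t₀ + 2 * Real.pi) :=
    intermediate_value_Icc (by linarith) hcont.continuousOn
      ⟨by linarith, by rw [hend]; linarith⟩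
  dsimp only at hM₁
  have hc' : Continuous h := continuous_iff_continuousAt.2 fun t => (hd t).continuousAt
  rcases le_total t t₁ with htt | htt
  · have hanti : AntitoneOn h (Icc t₀ t₁) := by
      apply antitoneOn_of_deriv_nonpos (convex_Icc _ _) hc'.continuousOn
        fun s _ => (hd s).differentiableAt.differentiableWithinAt
      intro s hs
      rw [interior_Icc] at hs
      rw [(hd s).deriv, neg_nonpos]
      have a1 := hmono hs.1
      have a2 := hmono hs.2
      dsimp only at a1 a2
      refine mul_nonneg (Real.exp_pos _).le (Real.sin_nonneg_of_nonneg_of_le_pi ?_ ?_) <;>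
        rw [sub_im] <;> linarith
    exact hanti ⟨le_rfl, ht₁.1⟩ ⟨ht.1, htt⟩ ht.1
  · have hmon : MonotoneOn h (Icc t₁ (t₀ + 2 * Real.pi)) := by
      apply monotoneOn_of_deriv_nonneg (convex_Icc _ _) hc'.continuousOn
        fun s _ => (hd s).differentiableAt.differentiableWithinAt
      intro s hs
      rw [interior_Icc] at hs
      rw [(hd s).deriv, neg_nonneg]
      have a1 := hmono hs.1
      have a2 := hmono hs.2
      dsimp only at a1 a2
      refine mul_nonpos_of_nonneg_of_nonpos (Real.exp_pos _).le ?_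
      rw [← Real.sin_sub_two_pi]
      apply Real.sin_nonpos_of_nonpos_of_neg_pi_le <;> rw [sub_im] <;> linarith
    exact (hmon ⟨htt, ht.2⟩ ⟨ht₁.2, le_rfl⟩ ht.2).trans hper.le

/-- The image of the disk lies on one side of the tangent line at `p(e^{it₀})`. -/
lemma support {r c : ℝ} (hr0 : 0 < r) (hr1 : r < 1) (hc : c * (2 * r) = 1) (t₀ : ℝ)
    {z : ℂ} (hz : ‖z‖ ≤ 1) :
    (P r c z * exp (-M r c t₀)).re ≤ (P r c (exp (t₀ * I)) * exp (-M r c t₀)).re := by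
  -- The maximum principle for the real part is that for the modulus of `exp (p a)`.
  have hdiff : ∀ z : ℂ, ‖z‖ ≤ 1 →
      DifferentiableAt ℂ (fun z => exp (P r c z * exp (-M r c t₀))) z := fun z hz =>
    ((hasDerivAt_P hc (norm_lt hr0 hr1 hz)).mul_const _).cexp.differentiableAt
  have hdc : DiffContOnCl ℂ (fun z => exp (P r c z * exp (-M r c t₀))) (ball (0 : ℂ) 1) := by
    apply DifferentiableOn.diffContOnCl
    intro z hz
    rw [closure_ball _ one_ne_zero, mem_closedBall_zero_iff] at hz
    exact (hdiff z hz).differentiableWithinAt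
  have hle := norm_le_of_forall_mem_frontier_norm_le
    (C := Real.exp (P r c (exp (t₀ * I)) * exp (-M r c t₀)).re) isBounded_ball hdc ?_
    (z := z) (by rwa [closure_ball _ one_ne_zero, mem_closedBall_zero_iff])
  · rwa [norm_exp, Real.exp_le_exp] at hle
  · intro y hy
    rw [frontier_ball _ one_ne_zero, mem_sphere_zero_iff_norm] at hy
    rw [norm_exp, Real.exp_le_exp]
    obtain ⟨t, ht, hty⟩ : ∃ t ∈ Icc t₀ (t₀ + 2 * Real.pi), exp (t * I) = y := by
      refine ⟨toIcoMod Real.two_pi_pos t₀ (arg y),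
        Ico_subset_Icc_self (toIcoMod_mem_Ico _ _ _), ?_⟩
      have e : exp (arg y * I) = y := by
        have := norm_mul_exp_arg_mul_I y
        rwa [hy, ofReal_one, one_mul] at this
      rw [toIcoMod, ← e]
      refine exp_eq_exp_iff_exists_int.2 ⟨-toIcoDiv Real.two_pi_pos t₀ (arg y), ?_⟩
      rw [e]
      push_cast [zsmul_eq_mul]
      ring
    rw [← hty]
    exact boundary_max hr0 hr1 hc t₀ t ht

lemma convex_image {r c : ℝ} (hr0 : 0 < r) (hr1 : r < 1) (hc : c * (2 * r) = 1) :
    Convex ℝ (P r c '' ball 0 1) := by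
  have hdiff : ∀ z ∈ closedBall (0 : ℂ) 1, DifferentiableAt ℂ (P r c) z := fun z hz =>
    (hasDerivAt_P hc (norm_lt hr0 hr1 (mem_closedBall_zero_iff.1 hz))).differentiableAt
  have hopen : IsOpen (P r c '' ball 0 1) := by
    have han : AnalyticOnNhd ℂ (P r c) (ball 0 1) := by
      apply DifferentiableOn.analyticOnNhd _ isOpen_ball
      exact fun z hz => (hdiff z (ball_subset_closedBall hz)).differentiableWithinAt
    rw [isOpen_iff_mem_nhds]
    rintro _ ⟨z, hz, rfl⟩
    have hd := hasDerivAt_P hc (norm_lt hr0 hr1 (mem_ball_zero_iff.1 hz).le)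
    have hs := (han z hz).hasStrictDerivAt
    rw [hd.deriv] at hs
    rw [← hs.map_nhds_eq (exp_ne_zero _)]
    exact image_mem_map (isOpen_ball.mem_nhds hz)
  refine convex_of_support hopen fun b hb => ?_
  have hcl : closure (P r c '' ball 0 1) ⊆ P r c '' closedBall 0 1 := by
    apply closure_minimal (image_mono ball_subset_closedBall)
    apply ((isCompact_closedBall _ _).image_of_continuousOn _).isClosed
    exact fun z hz => (hdiff z hz).continuousAt.continuousWithinAt
  rw [hopen.frontier_eq] at hb
  obtain ⟨ζ, hζ, rfl⟩ := hcl hb.1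
  rw [mem_closedBall_zero_iff] at hζ
  have hζ1 : ‖ζ‖ = 1 := by
    by_contra hne
    exact hb.2 ⟨ζ, mem_ball_zero_iff.2 (lt_of_le_of_ne hζ hne), rfl⟩
  have e : exp (arg ζ * I) = ζ := by
    have := norm_mul_exp_arg_mul_I ζ
    rwa [hζ1, ofReal_one, one_mul] at this
  refine ⟨exp (-M r c (arg ζ)), exp_ne_zero _, ?_⟩
  rintro _ ⟨z, hz, rfl⟩
  have := support hr0 hr1 hc (arg ζ) (mem_ball_zero_iff.1 hz).le
  rwa [e] at this

lemma re_pos {r c : ℝ} (hr0 : 0 < r) (hr1 : r < 1) (hc : c * (2 * r) = 1) {z : ℂ}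
    (hz : ‖z‖ ≤ 1) : 0 < (1 + z * deriv (deriv (P r c)) z / deriv (P r c) z).re := by
  have h := norm_lt hr0 hr1 hz
  have h1 : deriv (P r c) =ᶠ[𝓝 z] fun y => exp (L r c y) := by
    filter_upwards [eventually_norm h] with y hy using (hasDerivAt_P hc hy).deriv
  rw [h1.deriv_eq, h1.eq_of_nhds, (hasDerivAt_L hc h).cexp.deriv]
  have e : z * (exp (L r c z) * ((1 + 2 * (r : ℂ) ^ 2 * z) / Q r z)) / exp (L r c z)
      = z * ((1 + 2 * (r : ℂ) ^ 2 * z) / Q r z) := by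
    have := exp_ne_zero (L r c z)
    field_simp
  rw [e]
  exact key_pos hr0 hr1 hz

end PConvex

/-- for `0 < α < 1`, the function `p` is convex univalent in the
unit disk: it is injective there, its image is a convex domain, and in particular
`Re (1 + z p''(z)/p'(z)) > 0` for all `z` in the unit disk. -/
theorem statement11 (α : ℝ) (hα0 : 0 < α) (hα1 : α < 1) :
    Set.InjOn (pfun α) (Metric.ball 0 1) ∧
    Convex ℝ (pfun α '' Metric.ball 0 1) ∧
    (∀ z ∈ Metric.ball (0 : ℂ) 1,
      0 < (1 + z * deriv (deriv (pfun α)) z / deriv (pfun α) z).re) := by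
  have hr0 : 0 < Real.sqrt α := Real.sqrt_pos.2 hα0
  have hr1 : Real.sqrt α < 1 := by
    rw [Real.sqrt_lt' one_pos]
    simpa using hα1
  have hc : 1 / (2 * Real.sqrt α) * (2 * Real.sqrt α) = 1 := by
    field_simp
  have e : pfun α = PConvex.P (Real.sqrt α) (1 / (2 * Real.sqrt α)) := rfl
  rw [e]
  exact ⟨(PConvex.injOn_P hr0 hr1 hc).mono ball_subset_closedBall,
    PConvex.convex_image hr0 hr1 hc,
    fun z hz => PConvex.re_pos hr0 hr1 hc (mem_ball_zero_iff.1 hz).le⟩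
end

section
/- For every α with 0 ≤ α ≤ 3 − 2√2, the function F_α(z) = z/(1 − αz²) is convex univalent on Δ; in particular Re(1 + z F_α''(z)/F_α'(z)) > 0 for all z ∈ Δ. -/
/-!
Write `k = 1 - α`, `l = 1 + α`. Since `1 / F(z) = 1 / z - α z`, the map `1 / F` carries the unit
circle to the ellipse with semi-axes `k`, `l`, so the image of the disk under `F` is the inverse
of the exterior of an ellipse, i.e. the interior of a hippopede
`(u² + v²)² < (u / k)² + (v / l)²` (together with `0`). The identity behind this is `key_identity`;
it is applied in `image_eq`, where the second root `-1 / (α z)` of `F(z) = w` is used when the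
first one lies outside the disk.

In elliptic coordinates `u = k p c`, `v = l p s`, `c² + s² = 1`, the hippopede is `{g < 1}` with
the homogeneous function `g = p (k² c² + l² s²)`. If `l² ≤ 2 k²`, that is `α ≤ 3 - 2√2`, then `g`
dominates each of its tangent functionals (`tangent_le`), so it is a supremum of linear
functionals and `{g < 1}` is convex (`convex_hippopede`).

Finally, with `ζ = α z²`, `1 + z F'' / F' = (1 + 6 ζ + ζ²) / (1 - ζ²)`, whose real part has the sign
of `(1 - |ζ|²) (1 + |ζ|² + 6 Re ζ)`; this is positive when `|ζ| < 3 - 2√2`.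
-/

/-- The interior of the hippopede `(u² + v²)² = (u / k)² + (v / l)²` in elliptic polar coordinates
`u = k p c`, `v = l p s`. The centre `0` is included, through `p = 0`. -/
def hippopede (k l : ℝ) : Set ℂ :=
  {w | ∃ p c s : ℝ, 0 ≤ p ∧ c ^ 2 + s ^ 2 = 1 ∧ w.re = k * p * c ∧ w.im = l * p * s ∧
    p * (k ^ 2 * c ^ 2 + l ^ 2 * s ^ 2) < 1}

lemma exists_elliptic_polar {k l : ℝ} (hk : 0 < k) (hl : 0 < l) (w : ℂ) :
    ∃ p c s : ℝ, 0 ≤ p ∧ c ^ 2 + s ^ 2 = 1 ∧ w.re = k * p * c ∧ w.im = l * p * s := by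
  let ξ : ℂ := ⟨w.re / k, w.im / l⟩
  refine ⟨‖ξ‖, Real.cos ξ.arg, Real.sin ξ.arg, norm_nonneg _, Real.cos_sq_add_sin_sq _, ?_, ?_⟩
  · rw [mul_assoc, Complex.norm_mul_cos_arg]
    simp only [ξ]
    field_simp
  · rw [mul_assoc, Complex.norm_mul_sin_arg]
    simp only [ξ]
    field_simp

/-- On the ellipse `p = 1`, the gauge `k² c² + l² s²` dominates its tangent functional at
`(c₀, s₀)`. With `m = (k² + l²) / 2` and `d = (l² - k²) / 2` the difference factors as
`(1 - c c₀ - s s₀) (m + d (2 (c c₀ - s s₀) + c₀² - s₀²))`, where the second factor is at least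
`m - 3 d = 2 k² - l²`. -/
lemma tangent_le {k l c s c₀ s₀ : ℝ} (hkl : k ^ 2 ≤ l ^ 2) (hlk : l ^ 2 ≤ 2 * k ^ 2)
    (h : c ^ 2 + s ^ 2 = 1) (h₀ : c₀ ^ 2 + s₀ ^ 2 = 1) :
    2 * (k ^ 2 * c₀ * c + l ^ 2 * s₀ * s) - (k ^ 2 * c₀ ^ 2 + l ^ 2 * s₀ ^ 2) * (c₀ * c + s₀ * s)
      ≤ k ^ 2 * c ^ 2 + l ^ 2 * s ^ 2 := by
  have h1 : 0 ≤ 1 - c * c₀ - s * s₀ := by nlinarith [sq_nonneg (c - c₀), sq_nonneg (s - s₀)]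
  have h2 : -3 ≤ 2 * (c * c₀ - s * s₀) + c₀ ^ 2 - s₀ ^ 2 := by
    nlinarith [sq_nonneg (c + c₀), sq_nonneg (s - s₀), sq_nonneg c₀]
  have h3 : 0 ≤ (k ^ 2 + l ^ 2) / 2
      + (l ^ 2 - k ^ 2) / 2 * (2 * (c * c₀ - s * s₀) + c₀ ^ 2 - s₀ ^ 2) := by
    nlinarith [mul_nonneg (sub_nonneg.2 hkl) (by linarith : 0 ≤
      2 * (c * c₀ - s * s₀) + c₀ ^ 2 - s₀ ^ 2 + 3)]
  have h4 := mul_nonneg h1 h3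
  have hs : s ^ 2 = 1 - c ^ 2 := by linarith
  have hs₀ : s₀ ^ 2 = 1 - c₀ ^ 2 := by linarith
  have e : k ^ 2 * c ^ 2 + l ^ 2 * s ^ 2 - (2 * (k ^ 2 * c₀ * c + l ^ 2 * s₀ * s)
      - (k ^ 2 * c₀ ^ 2 + l ^ 2 * s₀ ^ 2) * (c₀ * c + s₀ * s))
      = (1 - c * c₀ - s * s₀) * ((k ^ 2 + l ^ 2) / 2
      + (l ^ 2 - k ^ 2) / 2 * (2 * (c * c₀ - s * s₀) + c₀ ^ 2 - s₀ ^ 2)) := by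
    grind
  linarith

lemma convex_hippopede {k l : ℝ} (hk : 0 < k) (hl : 0 < l) (hkl : k ^ 2 ≤ l ^ 2)
    (hlk : l ^ 2 ≤ 2 * k ^ 2) : Convex ℝ (hippopede k l) := by
  intro w₁ hw₁ w₂ hw₂ a b ha hb hab
  obtain ⟨p₀, c₀, s₀, hp₀, h₀, hre, him⟩ := exists_elliptic_polar hk hl (a • w₁ + b • w₂)
  refine ⟨p₀, c₀, s₀, hp₀, h₀, hre, him, ?_⟩
  set N := k ^ 2 * c₀ ^ 2 + l ^ 2 * s₀ ^ 2 with hN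
  -- `L` is the tangent functional of the gauge at the point `a • w₁ + b • w₂`.
  let L : ℂ → ℝ := fun w => (2 * k * c₀ - N * c₀ / k) * w.re + (2 * l * s₀ - N * s₀ / l) * w.im
  have hL : ∀ w ∈ hippopede k l, L w < 1 := by
    rintro w ⟨p, c, s, hp, h, hu, hv, hg⟩
    have e : L w = p * (2 * (k ^ 2 * c₀ * c + l ^ 2 * s₀ * s) - N * (c₀ * c + s₀ * s)) := by
      simp only [L, hu, hv]
      field_simp
      ring
    rw [e]
    exact (mul_le_mul_of_nonneg_left (tangent_le hkl hlk h h₀) hp).trans_lt hg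
  have e₀ : p₀ * N = L (a • w₁ + b • w₂) := by
    have : L (a • w₁ + b • w₂) = p₀ * (2 * N - N * (c₀ ^ 2 + s₀ ^ 2)) := by
      simp only [L, hre, him]
      rw [hN]
      field_simp
      ring
    rw [this, h₀]
    ring
  have e₁ : L (a • w₁ + b • w₂) = a * L w₁ + b * L w₂ := by
    simp [L]
    ring
  rw [e₀, e₁]
  have h1 := hL _ hw₁
  have h2 := hL _ hw₂
  by_cases ha' : a = 0
  · have : b = 1 := by linarith
    subst ha' this
    linarith
  · have : 0 < a := lt_of_le_of_ne ha (Ne.symm ha')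
    nlinarith

/-- The equation of the hippopede at `w = F(z)`, as a multiple of `(1 - |z|²) (1 - α² |z|²)`. Both
`(1 - αρ)² - (1 - α)² ρ` and `(1 + αρ)² - (1 + α)² ρ` equal `(1 - ρ) (1 - α² ρ)`. -/
lemma key_identity {α : ℝ} {z w : ℂ} (h : w * (1 - (α : ℂ) * z ^ 2) = z) :
    ((1 + α) ^ 2 * w.re ^ 2 + (1 - α) ^ 2 * w.im ^ 2
        - ((1 - α) * (1 + α)) ^ 2 * (w.re ^ 2 + w.im ^ 2) ^ 2)
        * Complex.normSq (1 - (α : ℂ) * z ^ 2) ^ 2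
      = (1 - Complex.normSq z) * (1 - α ^ 2 * Complex.normSq z)
        * ((1 + α) ^ 2 * z.re ^ 2 + (1 - α) ^ 2 * z.im ^ 2) := by
  obtain ⟨x, y⟩ := z
  obtain ⟨u, v⟩ := w
  have h1 := congrArg Complex.re h
  have h2 := congrArg Complex.im h
  simp [pow_two] at h1 h2
  simp only [Complex.normSq_apply, pow_two, Complex.sub_re, Complex.sub_im, Complex.mul_re,
    Complex.mul_im, Complex.ofReal_re, Complex.ofReal_im, Complex.one_re, Complex.one_im,
    zero_mul, sub_zero, add_zero, zero_sub]
  generalize hP : 1 - α * (x * x - y * y) = P at *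
  generalize hQ : α * (x * y + y * x) = Q at *
  have hu : u * (P * P + Q * Q) = x * (1 - α * (x * x + y * y)) := by
    subst hP hQ
    linear_combination (1 - α * (x * x - y * y)) * h1 - (α * (x * y + y * x)) * h2
  have hv : v * (P * P + Q * Q) = y * (1 + α * (x * x + y * y)) := by
    subst hP hQ
    linear_combination (1 - α * (x * x - y * y)) * h2 + (α * (x * y + y * x)) * h1
  have hr : (u * u + v * v) * (P * P + Q * Q) = x * x + y * y := by
    rw [← h1, ← h2]
    ring
  have e : ∀ D : ℝ, ((1 + α) * (1 + α) * (u * u) + (1 - α) * (1 - α) * (v * v)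
        - (1 - α) * (1 + α) * ((1 - α) * (1 + α)) * ((u * u + v * v) * (u * u + v * v))) * (D * D)
      = (1 + α) ^ 2 * (u * D) ^ 2 + (1 - α) ^ 2 * (v * D) ^ 2
        - ((1 - α) * (1 + α)) ^ 2 * ((u * u + v * v) * D) ^ 2 := by
    intro D
    ring
  have e' := e (P * P + Q * Q)
  rw [hu, hv, hr] at e'
  simp only [neg_mul_neg]
  rw [e']
  ring

lemma one_sub_ne_zero {α : ℝ} (h0 : 0 ≤ α) (h1 : α < 1) {z : ℂ} (hz : ‖z‖ < 1) :
    1 - (α : ℂ) * z ^ 2 ≠ 0 := by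
  intro h
  have h2 : (α : ℂ) * z ^ 2 = 1 := by linear_combination -h
  have h3 := congrArg norm h2
  simp [abs_of_nonneg h0] at h3
  nlinarith [norm_nonneg z, mul_nonneg h0 (norm_nonneg z)]

lemma one_add_mul_ne_zero {α : ℝ} (h0 : 0 ≤ α) (h1 : α < 1) {z z' : ℂ} (hz : ‖z‖ < 1)
    (hz' : ‖z'‖ < 1) : 1 + (α : ℂ) * z * z' ≠ 0 := by
  intro h
  have h2 : (α : ℂ) * z * z' = -1 := by linear_combination h
  have h3 := congrArg norm h2
  simp [abs_of_nonneg h0] at h3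
  nlinarith [norm_nonneg z, norm_nonneg z', mul_nonneg h0 (norm_nonneg z),
    mul_nonneg (mul_nonneg h0 (norm_nonneg z)) (norm_nonneg z')]

lemma exists_preimage (α : ℝ) (w : ℂ) : ∃ z : ℂ, w * (1 - (α : ℂ) * z ^ 2) = z := by
  by_cases h : (α : ℂ) * w = 0
  · refine ⟨w, ?_⟩
    linear_combination (-w ^ 2) * h
  · obtain ⟨d, hd⟩ := IsAlgClosed.exists_pow_nat_eq (1 + 4 * α * w ^ 2 : ℂ) (n := 2) (by norm_num)
    refine ⟨(-1 + d) / (2 * (α * w)), ?_⟩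
    have hα : (α : ℂ) ≠ 0 := left_ne_zero_of_mul h
    have hw : w ≠ 0 := right_ne_zero_of_mul h
    field_simp
    linear_combination -hd

lemma image_eq {α : ℝ} (h0 : 0 ≤ α) (h1 : α < 1) :
    (fun z : ℂ => z / (1 - (α : ℂ) * z ^ 2)) '' Metric.ball 0 1
      = hippopede (1 - α) (1 + α) := by
  have hk : 0 < 1 - α := by linarith
  have hl : 0 < 1 + α := by linarith
  -- The Cartesian form of the elliptic polar inequality, for `p ≠ 0`.
  have polar : ∀ (w : ℂ) (p c s : ℝ), 0 < p → c ^ 2 + s ^ 2 = 1 → w.re = (1 - α) * p * c →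
      w.im = (1 + α) * p * s → (p * ((1 - α) ^ 2 * c ^ 2 + (1 + α) ^ 2 * s ^ 2) < 1 ↔
      0 < (1 + α) ^ 2 * w.re ^ 2 + (1 - α) ^ 2 * w.im ^ 2
        - ((1 - α) * (1 + α)) ^ 2 * (w.re ^ 2 + w.im ^ 2) ^ 2) := by
    intro w p c s hp h hu hv
    have e : (1 + α) ^ 2 * w.re ^ 2 + (1 - α) ^ 2 * w.im ^ 2
        - ((1 - α) * (1 + α)) ^ 2 * (w.re ^ 2 + w.im ^ 2) ^ 2
        = ((1 - α) * (1 + α) * p) ^ 2 *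
          (1 - (p * ((1 - α) ^ 2 * c ^ 2 + (1 + α) ^ 2 * s ^ 2)) ^ 2) := by
      rw [hu, hv]
      linear_combination ((1 - α) * (1 + α) * p) ^ 2 * h
    have hg : 0 ≤ p * ((1 - α) ^ 2 * c ^ 2 + (1 + α) ^ 2 * s ^ 2) := by positivity
    rw [e, mul_pos_iff_of_pos_left (by positivity), sub_pos, sq_lt_one_iff₀ hg]
  have hpos : ∀ z : ℂ, z ≠ 0 → 0 < (1 + α) ^ 2 * z.re ^ 2 + (1 - α) ^ 2 * z.im ^ 2 := by
    intro z hz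
    by_cases hx : z.re = 0
    · have hy : z.im ≠ 0 := fun hy => hz (Complex.ext hx hy)
      positivity
    · positivity
  have hdisk : ∀ z : ℂ, ‖z‖ < 1 ↔ Complex.normSq z < 1 := by
    intro z
    rw [Complex.normSq_eq_norm_sq, sq_lt_one_iff₀ (norm_nonneg z)]
  ext w
  constructor
  · rintro ⟨z, hz, hzw⟩
    rw [mem_ball_zero_iff] at hz
    have hne := one_sub_ne_zero h0 h1 hz
    have hw : w * (1 - (α : ℂ) * z ^ 2) = z := by
      rw [← hzw]
      exact div_mul_cancel₀ _ hne
    obtain ⟨p, c, s, hp, h, hu, hv⟩ := exists_elliptic_polar hk hl w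
    refine ⟨p, c, s, hp, h, hu, hv, ?_⟩
    rcases hp.eq_or_lt with rfl | hp
    · simp
    rw [polar w p c s hp h hu hv]
    have hz0 : z ≠ 0 := by
      rintro rfl
      have hw0 : w = 0 := by simpa using hw
      have hc : c = 0 := by simpa [hw0, hk.ne', hp.ne'] using hu
      have hs : s = 0 := by simpa [hw0, hl.ne', hp.ne'] using hv
      simp [hc, hs] at h
    have hr := (hdisk z).1 hz
    have hr0 := Complex.normSq_nonneg z
    have hD : 0 < Complex.normSq (1 - (α : ℂ) * z ^ 2) := Complex.normSq_pos.2 hne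
    have hα2 : 0 < 1 - α ^ 2 * Complex.normSq z := by nlinarith
    have key := key_identity hw
    have : 0 < (1 - Complex.normSq z) * (1 - α ^ 2 * Complex.normSq z)
        * ((1 + α) ^ 2 * z.re ^ 2 + (1 - α) ^ 2 * z.im ^ 2) :=
      mul_pos (mul_pos (by linarith) hα2) (hpos z hz0)
    rw [← key] at this
    exact pos_of_mul_pos_left this (by positivity)
  · rintro ⟨p, c, s, hp, h, hu, hv, hg⟩
    rcases hp.eq_or_lt with rfl | hp
    · refine ⟨0, by simp, ?_⟩
      apply Complex.ext <;> simp [hu, hv]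
    suffices H : ∃ z : ℂ, ‖z‖ < 1 ∧ w * (1 - (α : ℂ) * z ^ 2) = z by
      obtain ⟨z, hz, hzw⟩ := H
      exact ⟨z, by simpa using hz, by
        rw [div_eq_iff (one_sub_ne_zero h0 h1 hz)]
        exact hzw.symm⟩
    rw [polar w p c s hp h hu hv] at hg
    obtain ⟨z, hz⟩ := exists_preimage α w
    by_cases hz1 : ‖z‖ < 1
    · exact ⟨z, hz1, hz⟩
    have hz0 : z ≠ 0 := by
      rintro rfl
      simp at hz1
    have hne : 1 - (α : ℂ) * z ^ 2 ≠ 0 := by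
      intro hne
      rw [hne, mul_zero] at hz
      exact hz0 hz.symm
    have hr : 1 ≤ Complex.normSq z := by
      rw [hdisk] at hz1
      exact not_lt.1 hz1
    have key := key_identity hz
    have hD : 0 < Complex.normSq (1 - (α : ℂ) * z ^ 2) := Complex.normSq_pos.2 hne
    have hlhs := mul_pos hg (pow_pos hD 2)
    rw [key] at hlhs
    have hprod := pos_of_mul_pos_left hlhs (hpos z hz0).le
    have hbig : 1 < α ^ 2 * Complex.normSq z := by
      by_contra hcon
      nlinarith [mul_nonneg (sub_nonneg.2 hr) (sub_nonneg.2 (not_lt.1 hcon))]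
    have hα : (α : ℂ) ≠ 0 := by
      intro hα
      have : α = 0 := by exact_mod_cast hα
      subst this
      norm_num at hbig
    -- The two solutions of `F(z) = w` have product `-1 / α`.
    refine ⟨-1 / (α * z), ?_, ?_⟩
    · rw [hdisk, Complex.normSq_div, Complex.normSq_mul, Complex.normSq_ofReal, ← pow_two]
      simp only [Complex.normSq_neg, Complex.normSq_one]
      rw [div_lt_one (by linarith)]
      exact hbig
    · field_simp
      linear_combination -hz

lemma hasDerivAt_F {α : ℂ} {z : ℂ} (h : 1 - α * z ^ 2 ≠ 0) :
    HasDerivAt (fun z : ℂ => z / (1 - α * z ^ 2)) ((1 + α * z ^ 2) / (1 - α * z ^ 2) ^ 2) z := by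
  have h2 := (hasDerivAt_id z).div (((hasDerivAt_pow 2 z).const_mul α).const_sub 1) h
  refine h2.congr_deriv ?_
  simp
  ring

lemma hasDerivAt_F' {α : ℂ} {z : ℂ} (h : 1 - α * z ^ 2 ≠ 0) :
    HasDerivAt (fun z : ℂ => (1 + α * z ^ 2) / (1 - α * z ^ 2) ^ 2)
      (2 * α * z * (3 + α * z ^ 2) / (1 - α * z ^ 2) ^ 3) z := by
  have h2 := (((hasDerivAt_pow 2 z).const_mul α).const_add 1).div
    ((((hasDerivAt_pow 2 z).const_mul α).const_sub 1).pow 2) (pow_ne_zero 2 h)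
  refine h2.congr_deriv ?_
  simp
  field_simp
  ring

lemma re_pos_aux {ζ : ℂ} (h1 : ‖ζ‖ < 1) (h : 0 < 1 + ‖ζ‖ ^ 2 - 6 * ‖ζ‖) :
    0 < ((1 + 6 * ζ + ζ ^ 2) / (1 - ζ ^ 2)).re := by
  have hne : 1 - ζ ^ 2 ≠ 0 := by
    intro h2
    have h3 : ζ ^ 2 = 1 := by linear_combination -h2
    have h4 := congrArg norm h3
    simp only [norm_pow, norm_one] at h4
    nlinarith [norm_nonneg ζ]
  have hD := Complex.normSq_pos.2 hne
  have hre := neg_le_of_abs_le (Complex.abs_re_le_norm ζ)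
  have hn : ‖ζ‖ ^ 2 = ζ.re ^ 2 + ζ.im ^ 2 := by
    rw [← Complex.normSq_eq_norm_sq, Complex.normSq_apply]
    ring
  have e : ((1 + 6 * ζ + ζ ^ 2) / (1 - ζ ^ 2)).re
      = (1 - ‖ζ‖ ^ 2) * (1 + ‖ζ‖ ^ 2 + 6 * ζ.re) / Complex.normSq (1 - ζ ^ 2) := by
    rw [Complex.div_re, hn, ← add_div]
    congr 1
    simp [pow_two]
    ring
  rw [e]
  exact div_pos (mul_pos (by nlinarith [norm_nonneg ζ]) (by linarith)) hD

/-- for `0 ≤ α ≤ 3 − 2√2`, the function `F_α(z) = z/(1 − αz²)` is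
convex univalent on the unit disk: it is injective, its image is convex, and in
particular `Re (1 + z F_α''(z)/F_α'(z)) > 0` for all `z` in the disk. -/
theorem statement18 (α : ℝ) (hα0 : 0 ≤ α) (hα1 : α ≤ 3 - 2 * Real.sqrt 2) :
    Set.InjOn (fun z : ℂ => z / (1 - (α : ℂ) * z ^ 2)) (Metric.ball 0 1) ∧
    Convex ℝ ((fun z : ℂ => z / (1 - (α : ℂ) * z ^ 2)) '' Metric.ball 0 1) ∧
    (∀ z ∈ Metric.ball (0 : ℂ) 1,
      0 < (1 + z * deriv (deriv (fun z : ℂ => z / (1 - (α : ℂ) * z ^ 2))) z /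
        deriv (fun z : ℂ => z / (1 - (α : ℂ) * z ^ 2)) z).re) := by
  have hs : Real.sqrt 2 ^ 2 = 2 := Real.sq_sqrt (by norm_num)
  have hs1 : 1.4 ≤ Real.sqrt 2 := Real.le_sqrt_of_sq_le (by norm_num)
  have hα : α < 1 := by linarith
  -- `3 - 2√2` is the smaller root of `x² - 6 x + 1`.
  have hq : 0 ≤ 1 + α ^ 2 - 6 * α := by
    nlinarith [mul_nonneg (sub_nonneg.2 hα1) (by linarith : 0 ≤ 3 + 2 * Real.sqrt 2 - α)]
  refine ⟨?_, ?_, ?_⟩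
  · intro z hz z' hz' h
    rw [mem_ball_zero_iff] at hz hz'
    simp only at h
    rw [div_eq_div_iff (one_sub_ne_zero hα0 hα hz) (one_sub_ne_zero hα0 hα hz')] at h
    have h2 : (z - z') * (1 + (α : ℂ) * z * z') = 0 := by linear_combination h
    rcases mul_eq_zero.1 h2 with h3 | h3
    · exact sub_eq_zero.1 h3
    · exact absurd h3 (one_add_mul_ne_zero hα0 hα hz hz')
  · rw [image_eq hα0 hα]
    exact convex_hippopede (by linarith) (by linarith) (by nlinarith) (by nlinarith)
  · intro z hz
    have hd : ∀ x ∈ Metric.ball (0 : ℂ) 1, deriv (fun z : ℂ => z / (1 - (α : ℂ) * z ^ 2)) x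
        = (1 + (α : ℂ) * x ^ 2) / (1 - (α : ℂ) * x ^ 2) ^ 2 := fun x hx =>
      (hasDerivAt_F (one_sub_ne_zero hα0 hα (mem_ball_zero_iff.1 hx))).deriv
    have hev : deriv (fun z : ℂ => z / (1 - (α : ℂ) * z ^ 2)) =ᶠ[nhds z]
        fun x => (1 + (α : ℂ) * x ^ 2) / (1 - (α : ℂ) * x ^ 2) ^ 2 :=
      Filter.eventuallyEq_of_mem (Metric.isOpen_ball.mem_nhds hz) hd
    have hz1 := mem_ball_zero_iff.1 hz
    have hm := one_sub_ne_zero hα0 hα hz1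
    have hp : 1 + (α : ℂ) * z ^ 2 ≠ 0 := by
      have := one_add_mul_ne_zero hα0 hα hz1 hz1
      rwa [mul_assoc, ← pow_two] at this
    rw [hev.deriv_eq, (hasDerivAt_F' hm).deriv, hd z hz]
    have hnorm : ‖(α : ℂ) * z ^ 2‖ = α * ‖z‖ ^ 2 := by
      simp [abs_of_nonneg hα0]
    have hz2 : ‖z‖ ^ 2 < 1 := by nlinarith [norm_nonneg z]
    have hle : α * ‖z‖ ^ 2 ≤ α := mul_le_of_le_one_right hα0 hz2.le
    have hpos := re_pos_aux (ζ := (α : ℂ) * z ^ 2) (by rw [hnorm]; linarith) (by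
      rw [hnorm]
      -- Strictness comes from `|z| < 1` when `0 < α`; for `α = 0` the expression is `1`.
      rcases hα0.eq_or_lt with rfl | hα'
      · norm_num
      · have hlt : α * ‖z‖ ^ 2 < α := mul_lt_of_lt_one_right hα' hz2
        nlinarith [mul_pos (sub_pos.2 hlt) (by linarith : 0 < 6 - α - α * ‖z‖ ^ 2)])
    convert hpos using 2
    have hpm : 1 - ((α : ℂ) * z ^ 2) ^ 2 = (1 - (α : ℂ) * z ^ 2) * (1 + (α : ℂ) * z ^ 2) := by
      ring
    have e : ∀ T M P : ℂ, M ≠ 0 → P ≠ 0 → z * (T / M ^ 3) / (P / M ^ 2) = z * T / (M * P) := by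
      intro T M P hM hP
      field_simp
    rw [hpm, e _ _ _ hm hp, eq_div_iff (mul_ne_zero hm hp), add_mul,
      div_mul_cancel₀ _ (mul_ne_zero hm hp)]
    ring
end
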